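/- arXiv:2509.11221 — 7 statements merged into one kernel-verified Lean document; each statement's English description precedes it below -/
import Mathlib

section
/- Let I ⊆ ℝ be an interval and f : ℝ → ℝ a continuous function that is operator convex on I. Then for every m ≥ 1, every m-tuple of Hermitian complex d×d matrices X₁,…,X_m with spectra contained in I, and every m-tuple of complex d×d matrices A₁,…,A_m satisfying ∑_{i=1}^m Aᵢ† Aᵢ = I_d, one has f(∑_{i=1}^m Aᵢ† Xᵢ Aᵢ) ≤ ∑_{i=1}^m Aᵢ† f(Xᵢ) Aᵢ in the Löwner order, where f is applied to Hermitian matrices via the continuous functional calculus (spectrally). -/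
/-!
The proof compresses a single instance of midpoint convexity. Put `T = diag(X₁, …, X_m)` and let
`V` be the block column with blocks `Aᵢ`; the hypothesis says that `V` is an isometry, `Vᴴ V = 1`.
The reflection `R = 2 V Vᴴ - 1` is a self-adjoint unitary with `R V = V`, so
`M = (T + R T R) / 2` satisfies `M V = V (Vᴴ T V)`, and hence `f(M) V = V f(Vᴴ T V)`.
Operator convexity at the pair `T`, `R T R`, compressed by `V`, reads
`Vᴴ f(T) V - f(Vᴴ T V) ≥ 0`, because `f(R T R) = R f(T) R`. Since
`Vᴴ T V = ∑ Aᵢᴴ Xᵢ Aᵢ` and `f(T) = diag(f(Xᵢ))`, this is the claim.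

All the functional calculus needed follows from Lagrange interpolation on finite spectra: `cfc f` at
finitely many Hermitian matrices is the evaluation of one common polynomial.
-/

open Matrix ComplexOrder

/-- `f` is operator convex on the interval `I ⊆ ℝ`: for every `n` and all Hermitian complex
`n × n` matrices `A`, `B` with spectra contained in `I`, one has
`f((A+B)/2) ≤ (f(A)+f(B))/2` in the Löwner order, where `f` is applied via the continuous
functional calculus. -/
def OperatorConvexOn (I : Set ℝ) (f : ℝ → ℝ) : Prop :=
  ∀ (n : ℕ) (A B : Matrix (Fin n) (Fin n) ℂ),
    A.IsHermitian → B.IsHermitian → spectrum ℝ A ⊆ I → spectrum ℝ B ⊆ I →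
    ((2:ℝ)⁻¹ • (cfc f A + cfc f B) - cfc f ((2:ℝ)⁻¹ • (A + B))).PosSemidef

lemma exists_poly_eq_on_finite (f : ℝ → ℝ) {s : Set ℝ} (hs : s.Finite) :
    ∃ p : Polynomial ℝ, ∀ x ∈ s, f x = p.eval x := by
  classical
  refine ⟨Lagrange.interpolate hs.toFinset id f, fun x hx => ?_⟩
  exact (Lagrange.eval_interpolate_at_node (v := id) f
    Function.injective_id.injOn (hs.mem_toFinset.mpr hx)).symm

lemma cfc_eq_aeval_of_eqOn {n : Type*} [Fintype n] [DecidableEq n] {f : ℝ → ℝ}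
    {A : Matrix n n ℂ} (hA : A.IsHermitian) {p : Polynomial ℝ}
    (h : ∀ x ∈ spectrum ℝ A, f x = p.eval x) : cfc f A = Polynomial.aeval A p := by
  rw [cfc_congr (g := p.eval) h, cfc_polynomial p A hA.isSelfAdjoint]

/-- The functional calculus preserves intertwining relations, the intertwiner `V` being
rectangular. -/
lemma cfc_mul_eq_mul_cfc {n k : Type*} [Fintype n] [DecidableEq n] [Fintype k] [DecidableEq k]
    (f : ℝ → ℝ) {A : Matrix n n ℂ} {B : Matrix k k ℂ} (hA : A.IsHermitian) (hB : B.IsHermitian)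
    {V : Matrix n k ℂ} (h : A * V = V * B) : cfc f A * V = V * cfc f B := by
  obtain ⟨p, hp⟩ := exists_poly_eq_on_finite f
    ((Matrix.finite_real_spectrum (A := A)).union (Matrix.finite_real_spectrum (A := B)))
  rw [cfc_eq_aeval_of_eqOn hA fun x hx => hp x (.inl hx),
    cfc_eq_aeval_of_eqOn hB fun x hx => hp x (.inr hx)]
  clear hp
  induction p using Polynomial.induction_on' with
  | add p q hp hq => rw [map_add, map_add, Matrix.add_mul, Matrix.mul_add, hp, hq]
  | monomial j a =>
    have hj : A ^ j * V = V * B ^ j := by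
      induction j with
      | zero => simp
      | succ j ih =>
        rw [pow_succ, pow_succ, Matrix.mul_assoc, h, ← Matrix.mul_assoc, ih, Matrix.mul_assoc]
    rw [Polynomial.aeval_monomial, Polynomial.aeval_monomial, ← Algebra.smul_def,
      ← Algebra.smul_def, Matrix.smul_mul, Matrix.mul_smul, hj]

lemma blockDiagonal_algebraMap {k n : Type*} [Fintype k] [DecidableEq k] [Fintype n]
    [DecidableEq n] (r : ℝ) :
    blockDiagonal (algebraMap ℝ (k → Matrix n n ℂ) r) = algebraMap ℝ _ r := by
  ext ⟨i, a⟩ ⟨j, b⟩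
  simp only [blockDiagonal_apply, Matrix.algebraMap_matrix_apply, Pi.algebraMap_apply,
    Prod.mk.injEq]
  grind

lemma spectrum_blockDiagonal_subset {k n : Type*} [Fintype k] [DecidableEq k] [Fintype n]
    [DecidableEq n] {I : Set ℝ} {X : k → Matrix n n ℂ} (h : ∀ i, spectrum ℝ (X i) ⊆ I) :
    spectrum ℝ (blockDiagonal X) ⊆ I := by
  intro r hr
  by_contra hrI
  refine hr ?_
  have hu : IsUnit (algebraMap ℝ (k → Matrix n n ℂ) r - X) :=
    Pi.isUnit_iff.mpr fun i => by
      by_contra hi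
      exact hrI (h i hi)
  have := hu.map (blockDiagonalRingHom n k ℂ)
  rwa [map_sub, blockDiagonalRingHom_apply, blockDiagonalRingHom_apply,
    blockDiagonal_algebraMap] at this

/-- Midpoint operator convexity over an arbitrary finite index type. -/
lemma OperatorConvexOn.posSemidef {I : Set ℝ} {f : ℝ → ℝ} (h : OperatorConvexOn I f)
    {n : Type*} [Fintype n] [DecidableEq n] {A B : Matrix n n ℂ} (hA : A.IsHermitian)
    (hB : B.IsHermitian) (hAI : spectrum ℝ A ⊆ I) (hBI : spectrum ℝ B ⊆ I) :
    ((2:ℝ)⁻¹ • (cfc f A + cfc f B) - cfc f ((2:ℝ)⁻¹ • (A + B))).PosSemidef := by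
  let e := Fintype.equivFin n
  let φ : Matrix n n ℂ ≃ₐ[ℝ] Matrix (Fin (Fintype.card n)) (Fin (Fintype.card n)) ℂ :=
    reindexAlgEquiv ℝ ℂ e
  have hφ : ∀ M, φ M = M.submatrix e.symm e.symm := fun M => rfl
  have herm : ∀ {M}, M.IsHermitian → (φ M).IsHermitian := fun hM => hM.submatrix _
  have hcfc : ∀ {M}, M.IsHermitian → cfc f (φ M) = φ (cfc f M) := by
    intro M hM
    obtain ⟨p, hp⟩ := exists_poly_eq_on_finite f (Matrix.finite_real_spectrum (A := M))
    rw [cfc_eq_aeval_of_eqOn hM hp, cfc_eq_aeval_of_eqOn (herm hM) (p := p),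
      Polynomial.aeval_algHom_apply]
    rwa [AlgEquiv.spectrum_eq]
  have hM : ((2:ℝ)⁻¹ • (A + B)).IsHermitian := (hA.add hB).smul (IsSelfAdjoint.all _)
  have key := h _ (φ A) (φ B) (herm hA) (herm hB) (by rwa [AlgEquiv.spectrum_eq])
    (by rwa [AlgEquiv.spectrum_eq])
  rw [← map_add, ← map_smul, hcfc hA, hcfc hB, hcfc hM, ← map_add, ← map_smul, ← map_sub, hφ] at key
  exact (posSemidef_submatrix_equiv e.symm).mp key

/-- Jensen's inequality for compression by a single isometry `V`. -/
lemma OperatorConvexOn.posSemidef_compression {I : Set ℝ} {f : ℝ → ℝ} (h : OperatorConvexOn I f)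
    {n k : Type*} [Fintype n] [DecidableEq n] [Fintype k] [DecidableEq k] {T : Matrix n n ℂ}
    (hT : T.IsHermitian) (hTI : spectrum ℝ T ⊆ I) {V : Matrix n k ℂ} (hV : Vᴴ * V = 1) :
    (Vᴴ * cfc f T * V - cfc f (Vᴴ * T * V)).PosSemidef := by
  set R : Matrix n n ℂ := (2:ℝ) • (V * Vᴴ) - 1 with hR
  have hRV : R * V = V := by
    rw [hR, Matrix.sub_mul, Matrix.smul_mul, Matrix.mul_assoc, hV, Matrix.mul_one, Matrix.one_mul, two_smul,
      add_sub_cancel_right]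
  have hRH : Rᴴ = R := by
    simp [hR, conjTranspose_sub, conjTranspose_smul]
  have hVR : Vᴴ * R = Vᴴ := by
    simpa [hRH] using congrArg conjTranspose hRV
  have hRR : R * R = 1 := by
    nth_rw 2 [hR]
    rw [mul_sub, mul_smul_comm, ← Matrix.mul_assoc, hRV, Matrix.mul_one, hR]
    abel
  have hS : (R * T * R).IsHermitian := by
    have := isHermitian_conjTranspose_mul_mul R hT
    rwa [hRH] at this
  have hSI : spectrum ℝ (R * T * R) ⊆ I := by
    have : spectrum ℝ (R * T * R) = spectrum ℝ T :=
      spectrum.units_conjugate (u := ⟨R, R, hRR, hRR⟩)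
    rwa [this]
  have hfS : cfc f (R * T * R) * R = R * cfc f T :=
    cfc_mul_eq_mul_cfc f hS hT (by rw [Matrix.mul_assoc, hRR, Matrix.mul_one])
  have hM : ((2:ℝ)⁻¹ • (T + R * T * R)).IsHermitian := (hT.add hS).smul (IsSelfAdjoint.all _)
  have hMV : (2:ℝ)⁻¹ • (T + R * T * R) * V = V * (Vᴴ * T * V) := by
    rw [Matrix.smul_mul, Matrix.add_mul, Matrix.mul_assoc (R * T), hRV, hR, Matrix.mul_assoc,
      Matrix.sub_mul, Matrix.one_mul, add_sub_cancel, Matrix.smul_mul, smul_smul]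
    simp [Matrix.mul_assoc]
  have hfM := cfc_mul_eq_mul_cfc f hM (isHermitian_conjTranspose_mul_mul V hT) hMV
  have hfSV : Vᴴ * cfc f (R * T * R) * V = Vᴴ * cfc f T * V := by
    conv_lhs => rw [← hRV]
    rw [Matrix.mul_assoc, ← Matrix.mul_assoc _ R, hfS, ← Matrix.mul_assoc, ← Matrix.mul_assoc, hRV,
      hVR]
  have key := (h.posSemidef hT hS hTI hSI).conjTranspose_mul_mul_same V
  rw [Matrix.mul_sub, Matrix.sub_mul, Matrix.mul_assoc _ (cfc f _) V, hfM, ← Matrix.mul_assoc, hV,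
    Matrix.one_mul, Matrix.mul_smul, Matrix.smul_mul, Matrix.mul_add, Matrix.add_mul, hfSV,
    ← two_smul ℝ, smul_smul, inv_mul_cancel₀ two_ne_zero, one_smul] at key
  exact key

lemma cfc_blockDiagonal {k n : Type*} [Fintype k] [DecidableEq k] [Fintype n]
    [DecidableEq n] (f : ℝ → ℝ) {X : k → Matrix n n ℂ} (hX : ∀ i, (X i).IsHermitian) :
    cfc f (blockDiagonal X) = blockDiagonal fun i => cfc f (X i) := by
  have hT : (blockDiagonal X).IsHermitian := by
    rw [IsHermitian, blockDiagonal_conjTranspose]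
    exact congrArg _ (funext hX)
  obtain ⟨p, hp⟩ := exists_poly_eq_on_finite f
    ((Matrix.finite_real_spectrum (A := blockDiagonal X)).union
      (Set.finite_iUnion fun i => Matrix.finite_real_spectrum (A := X i)))
  rw [cfc_eq_aeval_of_eqOn hT fun x hx => hp x (.inl hx)]
  have hi : (fun i => cfc f (X i)) = Polynomial.aeval X p := by
    funext i
    rw [cfc_eq_aeval_of_eqOn (hX i) fun x hx => hp x (.inr (Set.mem_iUnion.mpr ⟨i, hx⟩))]
    exact Polynomial.aeval_algHom_apply (Pi.evalAlgHom ℝ (fun _ => Matrix n n ℂ) i) X p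
  let φ : (k → Matrix n n ℂ) →ₐ[ℝ] Matrix (n × k) (n × k) ℂ :=
    { blockDiagonalRingHom n k ℂ with commutes' := blockDiagonal_algebraMap }
  rw [hi]
  exact Polynomial.aeval_algHom_apply φ X p

/-- Compressing a block diagonal matrix by the block column with blocks `A i`. -/
lemma compression_blockDiagonal {k n : Type*} [Fintype k] [DecidableEq k] [Fintype n]
    (A Y : k → Matrix n n ℂ) :
    (of fun (p : n × k) j => A p.2 p.1 j)ᴴ * blockDiagonal Y * (of fun (p : n × k) j => A p.2 p.1 j)
      = ∑ i, (A i)ᴴ * Y i * A i := by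
  ext a b
  simp only [mul_apply, Matrix.sum_apply, Fintype.sum_prod_type_right, blockDiagonal_apply,
    conjTranspose_apply, of_apply, mul_ite, mul_zero, Finset.sum_ite_irrel, Finset.sum_const_zero,
    Finset.sum_ite_eq', Finset.mem_univ, if_true]

/-- **Jensen's operator inequality.** If `f : ℝ → ℝ` is continuous and operator convex on an
interval `I`, then for every `m ≥ 1`, every `m`-tuple of Hermitian `d × d` matrices `X i` with
spectra in `I`, and every `m`-tuple of matrices `A i` with `∑ i, (A i)† * (A i) = 1`, one has
`f(∑ i, (A i)† * X i * A i) ≤ ∑ i, (A i)† * f(X i) * A i` in the Löwner order. -/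
theorem jensen_operator_inequality
    (I : Set ℝ) (hI : I.OrdConnected) (f : ℝ → ℝ) (hf : Continuous f)
    (hconv : OperatorConvexOn I f)
    (d m : ℕ) (hm : 1 ≤ m)
    (X : Fin m → Matrix (Fin d) (Fin d) ℂ)
    (A : Fin m → Matrix (Fin d) (Fin d) ℂ)
    (hX : ∀ i, (X i).IsHermitian)
    (hspec : ∀ i, spectrum ℝ (X i) ⊆ I)
    (hA : ∑ i, (A i)ᴴ * A i = 1) :
    ((∑ i, (A i)ᴴ * cfc f (X i) * A i) - cfc f (∑ i, (A i)ᴴ * X i * A i)).PosSemidef := by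
  have hT : (blockDiagonal X).IsHermitian := by
    rw [IsHermitian, blockDiagonal_conjTranspose]
    exact congrArg _ (funext hX)
  have hV := compression_blockDiagonal A 1
  simp only [blockDiagonal_one, Matrix.mul_one, Pi.one_apply, hA] at hV
  have key := hconv.posSemidef_compression hT (spectrum_blockDiagonal_subset hspec) hV
  rwa [cfc_blockDiagonal f hX, compression_blockDiagonal, compression_blockDiagonal] at key
end

section
/- Let I ⊆ ℝ be an interval and f : ℝ → ℝ a continuous function that is operator convex on I. Then for every complex d×d' matrix V that is an isometry (i.e. V† V = I_{d'}) and every Hermitian complex d×d matrix X with spectrum contained in I, one has f(V† X V) ≤ V† f(X) V in the Löwner order, where f is applied via the continuous functional calculus (spectrally). -/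
/-!
Let `P = V Vᴴ` be the range projection of the isometry and let `U = 2P - 1` be the reflection
in the range of `V`, a self-adjoint unitary with `U V = V`. Midpoint operator convexity applied to
`X` and `U X U`, which have the same spectrum, gives `f(Y) ≤ (f(X) + U f(X) U) / 2` for the pinching
`Y = (X + U X U) / 2 = P X P + (1 - P) X (1 - P)`. Compressing by `V`, the right-hand side becomes
`Vᴴ f(X) V`. Since `Y V = V (Vᴴ X V)` and the functional calculus respects intertwining relations
(`cfc_mul_eq_mul_cfc_of_intertwine`), also `f(Y) V = V f(Vᴴ X V)`, so the left-hand side becomes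
`f(Vᴴ X V)`.
-/

open Matrix ComplexOrder

/-- If `V` intertwines the Hermitian matrices `A` and `B`, it intertwines `f(A)` and `f(B)`: on the
finite set of all eigenvalues of `A` and `B`, the function `f` agrees with a polynomial. -/
lemma cfc_mul_eq_mul_cfc_of_intertwine {m n : ℕ} (f : ℝ → ℝ)
    {A : Matrix (Fin m) (Fin m) ℂ} {B : Matrix (Fin n) (Fin n) ℂ}
    (hA : A.IsHermitian) (hB : B.IsHermitian) {V : Matrix (Fin m) (Fin n) ℂ}
    (h : A * V = V * B) : cfc f A * V = V * cfc f B := by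
  have hfin : (spectrum ℝ A ∪ spectrum ℝ B).Finite :=
    (Matrix.finite_real_spectrum (A := A)).union (Matrix.finite_real_spectrum (A := B))
  set p : Polynomial ℝ := Lagrange.interpolate hfin.toFinset id f
  have hp : ∀ x ∈ spectrum ℝ A ∪ spectrum ℝ B, f x = p.eval x := fun x hx =>
    (Lagrange.eval_interpolate_at_node (v := id) f (Set.injOn_id _)
      (hfin.mem_toFinset.mpr hx)).symm
  rw [cfc_congr (a := A) (f := f) (g := p.eval) (fun x hx => hp x (Or.inl hx)),
    cfc_congr (a := B) (f := f) (g := p.eval) (fun x hx => hp x (Or.inr hx)),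
    cfc_polynomial p A hA.isSelfAdjoint, cfc_polynomial p B hB.isSelfAdjoint]
  have hpow : ∀ k : ℕ, A ^ k * V = V * B ^ k := by
    intro k
    induction k with
    | zero => simp
    | succ k ih => rw [pow_succ, Matrix.mul_assoc, h, ← Matrix.mul_assoc, ih, Matrix.mul_assoc,
        ← pow_succ]
  simp only [Polynomial.aeval_eq_sum_range, Matrix.sum_mul, Matrix.mul_sum, Matrix.smul_mul,
    Matrix.mul_smul, hpow]

/-- **Jensen's operator inequality, isometry version.** If `f : ℝ → ℝ` is continuous and
operator convex on an interval `I`, then for every isometry `V` (i.e. `Vᴴ * V = 1`) and every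
Hermitian matrix `X` with spectrum in `I`, one has `f(Vᴴ X V) ≤ Vᴴ f(X) V` in the Löwner
order. -/
theorem jensen_operator_inequality_isometry
    (I : Set ℝ) (hI : I.OrdConnected) (f : ℝ → ℝ) (hf : Continuous f)
    (hconv : OperatorConvexOn I f)
    (d d' : ℕ) (V : Matrix (Fin d) (Fin d') ℂ) (hV : Vᴴ * V = 1)
    (X : Matrix (Fin d) (Fin d) ℂ) (hX : X.IsHermitian) (hspec : spectrum ℝ X ⊆ I) :
    (Vᴴ * cfc f X * V - cfc f (Vᴴ * X * V)).PosSemidef := by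
  obtain ⟨P, hP⟩ : ∃ P, P = V * Vᴴ := ⟨_, rfl⟩
  have hPP : P * P = P := by
    rw [hP, Matrix.mul_assoc, ← Matrix.mul_assoc Vᴴ, hV, Matrix.one_mul]
  have hPV : P * V = V := by rw [hP, Matrix.mul_assoc, hV, Matrix.mul_one]
  have hPH : Pᴴ = P := by rw [hP]; simp
  obtain ⟨U, hU⟩ : ∃ U, U = P + P - 1 := ⟨_, rfl⟩
  have hUU : U * U = 1 := by
    rw [hU]; simp only [sub_mul, mul_sub, add_mul, mul_add, hPP, mul_one, one_mul]; abel
  have hUH : Uᴴ = U := by rw [hU]; simp [hPH]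
  have hUV : U * V = V := by
    rw [hU, Matrix.sub_mul, Matrix.add_mul, hPV, Matrix.one_mul]; abel
  have hVU : Vᴴ * U = Vᴴ := by
    simpa [hUH] using congrArg Matrix.conjTranspose hUV
  have hUXU : (U * X * U).IsHermitian := by
    simpa [hUH] using Matrix.isHermitian_mul_mul_conjTranspose U hX
  have hspecU : spectrum ℝ (U * X * U) ⊆ I := by
    have : spectrum ℝ (U * X * U) = spectrum ℝ X :=
      spectrum.units_conjugate (R := ℝ) (a := X) (u := ⟨U, U, hUU, hUU⟩)
    rwa [this]
  have hfU : cfc f (U * X * U) = U * cfc f X * U := by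
    have h := cfc_mul_eq_mul_cfc_of_intertwine f hUXU hX (V := U)
      (by rw [mul_assoc, hUU, mul_one])
    rw [← h, mul_assoc (cfc f (U * X * U)), hUU, mul_one]
  obtain ⟨Y, hY⟩ : ∃ Y, Y = (2 : ℝ)⁻¹ • (X + U * X * U) := ⟨_, rfl⟩
  have hYH : Y.IsHermitian := by
    rw [hY, Matrix.IsHermitian, Matrix.conjTranspose_smul, (hX.add hUXU).eq]; simp
  have hZ : (Vᴴ * X * V).IsHermitian := Matrix.isHermitian_conjTranspose_mul_mul V hX
  have hYV : Y * V = V * (Vᴴ * X * V) := by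
    -- `X + U X = 2 P X`, and `U V = V`
    have h1 : (X + U * X * U) * V = (2 : ℝ) • (P * (X * V)) := by
      rw [Matrix.add_mul, Matrix.mul_assoc (U * X), hUV, hU, Matrix.mul_assoc, Matrix.sub_mul,
        Matrix.add_mul, Matrix.one_mul, two_smul]
      abel
    rw [hY, Matrix.smul_mul, h1, smul_smul, hP]
    norm_num [Matrix.mul_assoc]
  have hfY := cfc_mul_eq_mul_cfc_of_intertwine f hYH hZ hYV
  have key := (hconv d X (U * X * U) hX hUXU hspec hspecU).conjTranspose_mul_mul_same V
  rw [← hY, hfU] at key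
  have hL : Vᴴ * cfc f Y * V = cfc f (Vᴴ * X * V) := by
    rw [Matrix.mul_assoc, hfY, ← Matrix.mul_assoc, hV, Matrix.one_mul]
  have hR : Vᴴ * ((2 : ℝ)⁻¹ • (cfc f X + U * cfc f X * U)) * V = Vᴴ * cfc f X * V := by
    have h2 : Vᴴ * (U * cfc f X * U) * V = Vᴴ * cfc f X * V := by
      rw [← Matrix.mul_assoc, ← Matrix.mul_assoc, hVU, Matrix.mul_assoc (Vᴴ * cfc f X), hUV]
    rw [Matrix.mul_smul, Matrix.smul_mul, Matrix.mul_add, Matrix.add_mul, h2, ← two_smul ℝ,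
      smul_smul]
    norm_num
  rwa [Matrix.mul_sub, Matrix.sub_mul, hL, hR] at key
end

section
/- Let I ⊆ ℝ be an interval with 0 ∈ I and f : ℝ → ℝ a continuous function that is operator convex on I and satisfies f(0) ≤ 0. Then for every complex d×d matrix A with A† A ≤ I_d (i.e. A is a contraction) and every Hermitian complex d×d matrix X with spectrum contained in I, one has f(A† X A) ≤ A† f(X) A in the Löwner order, where f is applied via the continuous functional calculus (spectrally). -/
/-!
The proof is the dilation argument of Hansen and Pedersen. With `B = (1 - A Aᴴ)^{1/2}` and
`C = (1 - Aᴴ A)^{1/2}`, the intertwining relation `A C = B A` makes the block matrices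
`U = [[A, B], [C, -Aᴴ]]` and `V = [[A, -B], [C, Aᴴ]]` unitary. For `Z = X ⊕ 0`, whose spectrum lies
in `I` because `0 ∈ I`, the off-diagonal blocks of `Uᴴ Z U` and `Vᴴ Z V` cancel in the mean, which
is `Aᴴ X A ⊕ B X B`. Midpoint operator convexity applied to these two matrices, compressed to the
upper left block, reads `f(Aᴴ X A) ≤ Aᴴ f(X) A + f(0) (1 - Aᴴ A)`, and `f(0) ≤ 0` lets the last term
be dropped.

The functional calculus of a Hermitian matrix agrees with evaluation at a real polynomial
interpolating `f` on a finite set containing the spectrum. Choosing one polynomial for several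
matrices at once reduces the compatibility of `cfc` with direct sums (`cfc_fromBlocks`), unitary
conjugation (`cfc_conj`), reindexing (`OperatorConvexOn.sum`) and the intertwining relation
(`exists_sqrt_defect`) to identities for polynomials.
-/

open Matrix ComplexOrder

section helpers

variable {m n : Type*} [Fintype m] [DecidableEq m] [Fintype n] [DecidableEq n]

theorem cfc_eq_aeval_of_interp (f : ℝ → ℝ) (M : Matrix n n ℂ) (hM : M.IsHermitian)
    (p : Polynomial ℝ) (hp : ∀ x ∈ spectrum ℝ M, p.eval x = f x) :
    cfc f M = Polynomial.aeval M p := by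
  rw [← cfc_polynomial p M hM.isSelfAdjoint]
  exact cfc_congr fun x hx => (hp x hx).symm

theorem exists_interp (f : ℝ → ℝ) {S : Set ℝ} (hS : S.Finite) :
    ∃ p : Polynomial ℝ, ∀ x ∈ S, p.eval x = f x := by
  refine ⟨Lagrange.interpolate hS.toFinset id f, fun x hx => ?_⟩
  exact Lagrange.eval_interpolate_at_node (v := id) f Function.injective_id.injOn
    (hS.mem_toFinset.2 hx)

theorem aeval_semiconj (A M N : Matrix n n ℂ) (h : A * M = N * A) (p : Polynomial ℝ) :
    A * Polynomial.aeval M p = Polynomial.aeval N p * A := by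
  induction p using Polynomial.induction_on' with
  | add p q hp hq => simp [mul_add, add_mul, hp, hq]
  | monomial k a =>
    have hk : A * M ^ k = N ^ k * A := (SemiconjBy.pow_right (a := A) (x := M) (y := N) h k).eq
    simp [Polynomial.aeval_monomial, Algebra.algebraMap_eq_smul_one, hk]

theorem aeval_fromBlocks (P : Matrix m m ℂ) (Q : Matrix n n ℂ) (p : Polynomial ℝ) :
    Polynomial.aeval (fromBlocks P 0 0 Q) p
      = fromBlocks (Polynomial.aeval P p) 0 0 (Polynomial.aeval Q p) := by
  induction p using Polynomial.induction_on' with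
  | add p q hp hq => simp [hp, hq, fromBlocks_add]
  | monomial k a =>
    simp [Polynomial.aeval_monomial, Algebra.algebraMap_eq_smul_one, fromBlocks_diagonal_pow,
      fromBlocks_smul]

theorem cfc_fromBlocks (f : ℝ → ℝ) {P : Matrix m m ℂ} {Q : Matrix n n ℂ}
    (hP : P.IsHermitian) (hQ : Q.IsHermitian) :
    cfc f (fromBlocks P 0 0 Q) = fromBlocks (cfc f P) 0 0 (cfc f Q) := by
  obtain ⟨p, hp⟩ := exists_interp f (((finite_real_spectrum (A := P)).union
    (finite_real_spectrum (A := Q))).union (finite_real_spectrum (A := fromBlocks P 0 0 Q)))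
  rw [cfc_eq_aeval_of_interp f P hP p fun x hx => hp x (.inl (.inl hx)),
    cfc_eq_aeval_of_interp f Q hQ p fun x hx => hp x (.inl (.inr hx)),
    cfc_eq_aeval_of_interp f _ (hP.fromBlocks (by simp) hQ) p fun x hx => hp x (.inr hx),
    aeval_fromBlocks]

theorem spectrum_fromBlocks_subset (P : Matrix m m ℂ) (Q : Matrix n n ℂ) :
    spectrum ℝ (fromBlocks P 0 0 Q) ⊆ spectrum ℝ P ∪ spectrum ℝ Q := by
  intro r hr
  by_contra h
  simp only [Set.mem_union, not_or, spectrum.notMem_iff] at h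
  refine hr ?_
  have e : algebraMap ℝ (Matrix (m ⊕ n) (m ⊕ n) ℂ) r - fromBlocks P 0 0 Q
      = fromBlocks (algebraMap ℝ _ r - P) 0 0 (algebraMap ℝ _ r - Q) := by
    simp only [Algebra.algebraMap_eq_smul_one, ← fromBlocks_one, fromBlocks_smul, sub_eq_add_neg,
      fromBlocks_neg, fromBlocks_add]
    simp
  change IsUnit _
  rw [e, isUnit_iff_isUnit_det, det_fromBlocks_zero₂₁]
  exact ((isUnit_iff_isUnit_det _).1 h.1).mul ((isUnit_iff_isUnit_det _).1 h.2)

theorem cfc_conj (f : ℝ → ℝ) {M : Matrix n n ℂ} (hM : M.IsHermitian) (U : Matrix n n ℂ)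
    (hU : Uᴴ * U = 1) : cfc f (Uᴴ * M * U) = Uᴴ * cfc f M * U := by
  have hU' : U * Uᴴ = 1 := mul_eq_one_comm.1 hU
  obtain ⟨p, hp⟩ := exists_interp f ((finite_real_spectrum (A := M)).union
    (finite_real_spectrum (A := Uᴴ * M * U)))
  rw [cfc_eq_aeval_of_interp f M hM p fun x hx => hp x (.inl hx),
    cfc_eq_aeval_of_interp f _ (isHermitian_conjTranspose_mul_mul U hM) p
      fun x hx => hp x (.inr hx)]
  have h := aeval_semiconj U (Uᴴ * M * U) M (by simp only [← mul_assoc, hU', one_mul]) p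
  rw [mul_assoc Uᴴ (Polynomial.aeval M p), ← h, ← mul_assoc, hU, one_mul]

theorem spectrum_conj_subset (M U : Matrix n n ℂ) (hU : Uᴴ * U = 1) :
    spectrum ℝ (Uᴴ * M * U) ⊆ spectrum ℝ M := by
  have hU' : U * Uᴴ = 1 := mul_eq_one_comm.1 hU
  have := spectrum.units_conjugate' (R := ℝ) (a := M) (u := ⟨U, Uᴴ, hU', hU⟩)
  exact this.subset

/-- Operator convexity, formulated for matrices indexed by `Fin (d + d)`, transfers to
`2 × 2` block matrices along the equivalence `Fin d ⊕ Fin d ≃ Fin (d + d)`. -/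
theorem OperatorConvexOn.sum {I : Set ℝ} {f : ℝ → ℝ} (h : OperatorConvexOn I f) {d : ℕ}
    {A B : Matrix (Fin d ⊕ Fin d) (Fin d ⊕ Fin d) ℂ} (hA : A.IsHermitian) (hB : B.IsHermitian)
    (hAI : spectrum ℝ A ⊆ I) (hBI : spectrum ℝ B ⊆ I) :
    ((2:ℝ)⁻¹ • (cfc f A + cfc f B) - cfc f ((2:ℝ)⁻¹ • (A + B))).PosSemidef := by
  let e := reindexAlgEquiv ℝ ℂ (finSumFinEquiv (m := d) (n := d))
  have herm : ∀ M : Matrix (Fin d ⊕ Fin d) (Fin d ⊕ Fin d) ℂ, M.IsHermitian →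
      (e M).IsHermitian := fun M hM => hM.submatrix _
  have key : ∀ M : Matrix (Fin d ⊕ Fin d) (Fin d ⊕ Fin d) ℂ, M.IsHermitian →
      cfc f (e M) = e (cfc f M) := by
    intro M hM
    obtain ⟨p, hp⟩ := exists_interp f (finite_real_spectrum (A := M))
    rw [cfc_eq_aeval_of_interp f M hM p hp, cfc_eq_aeval_of_interp f _ (herm M hM) p
      (by rwa [AlgEquiv.spectrum_eq e])]
    exact Polynomial.aeval_algHom_apply e M p
  have hAB : ((2:ℝ)⁻¹ • (A + B)).IsHermitian := by
    simp [IsHermitian, conjTranspose_smul, hA.eq, hB.eq]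
  have := h (d + d) (e A) (e B) (herm A hA) (herm B hB)
    (by rwa [AlgEquiv.spectrum_eq e]) (by rwa [AlgEquiv.spectrum_eq e])
  rw [← map_add, ← map_smul, key _ hA, key _ hB, key _ hAB, ← map_add, ← map_smul, ← map_sub] at this
  exact (posSemidef_submatrix_equiv (finSumFinEquiv (m := d) (n := d)).symm).1 this

/-- The defect operators `B`, `C` of a contraction `A`. They are intertwined by `A` because
`A (1 - Aᴴ A) = (1 - A Aᴴ) A` and both are the same polynomial in their squares. -/
theorem exists_sqrt_defect (A : Matrix n n ℂ) (hA : (1 - Aᴴ * A).PosSemidef) :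
    ∃ B C : Matrix n n ℂ, B.IsHermitian ∧ C.IsHermitian ∧
      B * B = 1 - A * Aᴴ ∧ C * C = 1 - Aᴴ * A ∧ A * C = B * A := by
  have hA' : (1 - A * Aᴴ).PosSemidef := by
    -- Positivity passes from `1 - Aᴴ A` to `1 - A Aᴴ` because the latter is its
    -- own square plus `A (1 - Aᴴ A) Aᴴ`.
    have e : 1 - A * Aᴴ = (1 - A * Aᴴ)ᴴ * (1 - A * Aᴴ) + A * (1 - Aᴴ * A) * Aᴴ := by
      simp only [conjTranspose_sub, conjTranspose_one, conjTranspose_mul,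
        conjTranspose_conjTranspose]
      noncomm_ring
    rw [e]
    exact (posSemidef_conjTranspose_mul_self _).add (hA.mul_mul_conjTranspose_same A)
  have sq : ∀ M : Matrix n n ℂ, M.PosSemidef → cfc Real.sqrt M * cfc Real.sqrt M = M := by
    intro M hM
    rw [← cfc_mul Real.sqrt Real.sqrt M]
    conv_rhs => rw [← cfc_id' ℝ M hM.1.isSelfAdjoint]
    refine cfc_congr fun x hx => Real.mul_self_sqrt ?_
    rw [hM.1.spectrum_real_eq_range_eigenvalues] at hx
    obtain ⟨i, rfl⟩ := hx
    exact hM.eigenvalues_nonneg i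
  refine ⟨cfc Real.sqrt (1 - A * Aᴴ), cfc Real.sqrt (1 - Aᴴ * A), cfc_predicate _ _,
    cfc_predicate _ _, sq _ hA', sq _ hA, ?_⟩
  obtain ⟨p, hp⟩ := exists_interp Real.sqrt ((finite_real_spectrum (A := 1 - Aᴴ * A)).union
    (finite_real_spectrum (A := 1 - A * Aᴴ)))
  rw [cfc_eq_aeval_of_interp _ _ hA.1 p fun x hx => hp x (.inl hx),
    cfc_eq_aeval_of_interp _ _ hA'.1 p fun x hx => hp x (.inr hx)]
  exact aeval_semiconj _ _ _ (by simp only [mul_sub, sub_mul, mul_assoc, mul_one, one_mul]) p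

end helpers

/-- **Contractive Jensen's operator inequality.** If `f : ℝ → ℝ` is continuous, operator convex
on an interval `I` containing `0`, and `f(0) ≤ 0`, then for every contraction `A`
(i.e. `Aᴴ * A ≤ 1`) and every Hermitian matrix `X` with spectrum in `I`, one has
`f(Aᴴ X A) ≤ Aᴴ f(X) A` in the Löwner order. -/
theorem jensen_operator_inequality_contractive
    (I : Set ℝ) (hI : I.OrdConnected) (h0 : (0:ℝ) ∈ I)
    (f : ℝ → ℝ) (hf : Continuous f) (hconv : OperatorConvexOn I f) (hf0 : f 0 ≤ 0)
    (d : ℕ) (A : Matrix (Fin d) (Fin d) ℂ) (hA : ((1 : Matrix (Fin d) (Fin d) ℂ) - Aᴴ * A).PosSemidef)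
    (X : Matrix (Fin d) (Fin d) ℂ) (hX : X.IsHermitian) (hspec : spectrum ℝ X ⊆ I) :
    (Aᴴ * cfc f X * A - cfc f (Aᴴ * X * A)).PosSemidef := by
  obtain ⟨B, C, hB, hC, hBB, hCC, hAC⟩ := exists_sqrt_defect A hA
  have hAC' : C * Aᴴ = Aᴴ * B := by
    simpa [conjTranspose_mul, hB.eq, hC.eq] using congrArg conjTranspose hAC
  let U := fromBlocks A B C (-Aᴴ)
  let V := fromBlocks A (-B) C Aᴴ
  let Z := fromBlocks X 0 0 (0 : Matrix (Fin d) (Fin d) ℂ)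
  have hU : Uᴴ * U = 1 := by
    simp [U, fromBlocks_conjTranspose, fromBlocks_multiply, hB.eq, hC.eq, hBB, hCC, hAC, hAC',
      ← fromBlocks_one]
  have hV : Vᴴ * V = 1 := by
    simp [V, fromBlocks_conjTranspose, fromBlocks_multiply, hB.eq, hC.eq, hBB, hCC, hAC, hAC',
      ← fromBlocks_one]
  have hZ : Z.IsHermitian := hX.fromBlocks (by simp) isHermitian_zero
  have hZI : spectrum ℝ Z ⊆ I := by
    refine (spectrum_fromBlocks_subset _ _).trans (Set.union_subset hspec fun r hr => ?_)
    have : r = 0 := by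
      by_contra h
      refine hr ?_
      simpa [spectrum.mem_resolventSet_iff] using (IsUnit.mk0 r h).map (algebraMap ℝ (Matrix (Fin d) (Fin d) ℂ))
    exact this ▸ h0
  have h := hconv.sum (isHermitian_conjTranspose_mul_mul U hZ)
    (isHermitian_conjTranspose_mul_mul V hZ) ((spectrum_conj_subset Z U hU).trans hZI)
    ((spectrum_conj_subset Z V hV).trans hZI)
  have hmean : (2:ℝ)⁻¹ • (Uᴴ * Z * U + Vᴴ * Z * V)
      = fromBlocks (Aᴴ * X * A) 0 0 (Bᴴ * X * B) := by
    simp [U, V, Z, fromBlocks_conjTranspose, fromBlocks_multiply, fromBlocks_add, fromBlocks_smul,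
      ← two_smul ℝ, smul_smul]
  have hf00 : cfc f (0 : Matrix (Fin d) (Fin d) ℂ) = (f 0) • 1 := by
    rw [cfc_apply_zero, Algebra.algebraMap_eq_smul_one]
  rw [cfc_conj f hZ U hU, cfc_conj f hZ V hV, hmean,
    cfc_fromBlocks f (isHermitian_conjTranspose_mul_mul A hX)
      (isHermitian_conjTranspose_mul_mul B hX), cfc_fromBlocks f hX isHermitian_zero, hf00] at h
  -- The upper left block of the convexity inequality; `Cᴴ (f(0) • 1) C` gives the `f 0` term.
  have h11 : (Aᴴ * cfc f X * A + f 0 • (1 - Aᴴ * A) - cfc f (Aᴴ * X * A)).PosSemidef := by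
    have hmean' : (2:ℝ)⁻¹ • (Uᴴ * fromBlocks (cfc f X) 0 0 (f 0 • 1) * U
          + Vᴴ * fromBlocks (cfc f X) 0 0 (f 0 • 1) * V)
        = fromBlocks (Aᴴ * cfc f X * A + f 0 • (1 - Aᴴ * A)) 0 0
          (Bᴴ * cfc f X * B + f 0 • (A * Aᴴ)) := by
      simp [U, V, fromBlocks_conjTranspose, fromBlocks_multiply, fromBlocks_add, fromBlocks_smul,
        ← two_smul ℝ, smul_smul, hC.eq, hCC]
      constructor <;> abel
    rw [hmean'] at h
    exact h.submatrix Sum.inl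
  have hdef : ((-f 0) • (1 - Aᴴ * A)).PosSemidef := hA.smul (neg_nonneg.2 hf0)
  convert h11.add hdef using 1
  module
end

section
/- Let ι and κ be nonempty finite types and let ρ be a positive definite density matrix on ℂ indexed by (ι × κ) × (ι × κ). Then Tr_b(ρ) is positive definite, and the linear map V sending a complex ι × ι matrix X to the (ι × κ) × (ι × κ) matrix V(X) := ((X · Tr_b(ρ)^{-1/2}) ⊗ I_κ) · ρ^{1/2} (where ⊗ is the Kronecker product and I_κ is the identity κ × κ matrix) is an isometry for the Hilbert–Schmidt inner product: for all complex ι × ι matrices X and Y, Tr(V(Y)† · V(X)) = Tr(Y† · X). -/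
/-!
Cyclicity of the trace collapses the two factors `ρ^{1/2}` into `ρ`, so the left-hand side is
`Tr ((A ⊗ I) ρ)` with `A = (Y σ)ᴴ (X σ)` and `σ = (Tr_b ρ)^{-1/2}`. The partial trace is adjoint to
`A ↦ A ⊗ I` (`trace_kronecker_one_mul`), which turns this into `Tr (A · Tr_b ρ)`. Since `σ` is
Hermitian, cyclicity gives `Tr (Yᴴ X · σ (Tr_b ρ) σ)`, and `σ (Tr_b ρ) σ = I` by the exponent law
for powers of a positive definite matrix (`mpow_mul_mpow`). Positive definiteness of `Tr_b ρ` holds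
because it is a nonempty sum of principal submatrices of `ρ`.
-/

open Matrix ComplexOrder Kronecker

/-- The partial trace over the second tensor factor: `trB A i j = ∑ k, A (i,k) (j,k)`. -/
noncomputable def trB {ι κ : Type*} [Fintype κ] (A : Matrix (ι × κ) (ι × κ) ℂ) :
    Matrix ι ι ℂ :=
  Matrix.of fun i j => ∑ k : κ, A (i, k) (j, k)

/-- Real power of a matrix, applied via the continuous functional calculus (spectrally). -/
noncomputable def mpow {ι : Type*} [Fintype ι] [DecidableEq ι]
    (M : Matrix ι ι ℂ) (s : ℝ) : Matrix ι ι ℂ :=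
  cfc (fun x : ℝ => Real.rpow x s) M

/-- Logarithm of a matrix, applied via the continuous functional calculus (spectrally),
with the convention `Real.log 0 = 0`. -/
noncomputable def mlog {ι : Type*} [Fintype ι] [DecidableEq ι]
    (M : Matrix ι ι ℂ) : Matrix ι ι ℂ :=
  cfc Real.log M

/-- The Petz operator `V_ρ` associated to a state `ρ` on a composite system:
`V_ρ(X) = ((X · Tr_b(ρ)^{-1/2}) ⊗ I) · ρ^{1/2}`. -/
noncomputable def petzV {ι κ : Type*} [Fintype ι] [DecidableEq ι] [Fintype κ] [DecidableEq κ]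
    (ρ : Matrix (ι × κ) (ι × κ) ℂ) (X : Matrix ι ι ℂ) : Matrix (ι × κ) (ι × κ) ℂ :=
  ((X * mpow (trB ρ) (-(1/2 : ℝ))) ⊗ₖ (1 : Matrix κ κ ℂ)) * mpow ρ (1/2 : ℝ)

theorem trB_posDef {ι κ : Type*} [Fintype κ] [Nonempty κ]
    {ρ : Matrix (ι × κ) (ι × κ) ℂ} (hρ : ρ.PosDef) : (trB ρ).PosDef := by
  have h : trB ρ = ∑ k : κ, ρ.submatrix (fun i => (i, k)) (fun i => (i, k)) := by
    ext i j
    simp [trB, Matrix.sum_apply]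
  rw [h]
  exact Matrix.posDef_sum Finset.univ_nonempty fun k _ =>
    hρ.submatrix fun i j hij => (Prod.mk.inj hij).1

/-- The partial trace is the trace-pairing adjoint of `A ↦ A ⊗ I`. -/
theorem trace_kronecker_one_mul {ι κ : Type*} [Fintype ι] [Fintype κ] [DecidableEq κ]
    (A : Matrix ι ι ℂ) (ρ : Matrix (ι × κ) (ι × κ) ℂ) :
    ((A ⊗ₖ (1 : Matrix κ κ ℂ)) * ρ).trace = (A * trB ρ).trace := by
  simp only [Matrix.trace, Matrix.diag, Matrix.mul_apply, Matrix.kroneckerMap_apply,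
    Fintype.sum_prod_type, trB, Matrix.of_apply, Matrix.one_apply, Finset.mul_sum]
  refine Finset.sum_congr rfl fun i _ => ?_
  rw [Finset.sum_comm]
  refine Finset.sum_congr rfl fun j _ => Finset.sum_congr rfl fun k _ => ?_
  simp

section Powers

variable {ι : Type*} [Fintype ι] [DecidableEq ι] {M : Matrix ι ι ℂ}

theorem mpow_conjTranspose (M : Matrix ι ι ℂ) (s : ℝ) : (mpow M s)ᴴ = mpow M s :=
  cfc_predicate (p := IsSelfAdjoint) (fun x : ℝ => Real.rpow x s) M

theorem pos_of_mem_spectrum (hM : M.PosDef) {x : ℝ} (hx : x ∈ spectrum ℝ M) : 0 < x := by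
  rw [hM.isHermitian.spectrum_real_eq_range_eigenvalues] at hx
  obtain ⟨i, rfl⟩ := hx
  exact hM.eigenvalues_pos i

theorem mpow_mul_mpow (hM : M.PosDef) (s t : ℝ) : mpow M s * mpow M t = mpow M (s + t) := by
  -- The spectrum is finite, so every function is continuous on it.
  have hc (f : ℝ → ℝ) : ContinuousOn f (spectrum ℝ M) :=
    Matrix.finite_real_spectrum.continuousOn f
  unfold mpow
  rw [← cfc_mul _ _ M (hc _) (hc _)]
  exact cfc_congr fun x hx => (Real.rpow_add (pos_of_mem_spectrum hM hx) s t).symm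

theorem mpow_one (hM : M.PosDef) : mpow M 1 = M := by
  have hsa : IsSelfAdjoint M := hM.isHermitian
  exact (cfc_congr fun x _ => Real.rpow_one x).trans (cfc_id' ℝ M)

theorem mpow_zero (hM : M.PosDef) : mpow M 0 = 1 := by
  have hsa : IsSelfAdjoint M := hM.isHermitian
  exact (cfc_congr fun x _ => Real.rpow_zero x).trans (cfc_const_one ℝ M)

end Powers

/-- **The Petz operator `V_ρ` is an isometry.** If `ρ` is a positive definite density matrix on
the composite system, then `Tr_b(ρ)` is positive definite, and `V_ρ` is an isometry for the
Hilbert–Schmidt inner product: `Tr(V_ρ(Y)† V_ρ(X)) = Tr(Y† X)` for all `X`, `Y`. -/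
theorem petz_V_isometry {ι κ : Type*}
    [Fintype ι] [DecidableEq ι] [Nonempty ι] [Fintype κ] [DecidableEq κ] [Nonempty κ]
    (ρ : Matrix (ι × κ) (ι × κ) ℂ) (hρ : ρ.PosDef) (hρtr : ρ.trace = 1) :
    (trB ρ).PosDef ∧
    ∀ X Y : Matrix ι ι ℂ,
      ((petzV ρ Y)ᴴ * petzV ρ X).trace = (Yᴴ * X).trace := by
  have hτ := trB_posDef hρ
  refine ⟨hτ, fun X Y => ?_⟩
  have hR : mpow ρ (1 / 2) * mpow ρ (1 / 2) = ρ := by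
    rw [mpow_mul_mpow hρ, add_halves, mpow_one hρ]
  have hσ : mpow (trB ρ) (-(1 / 2)) * trB ρ * mpow (trB ρ) (-(1 / 2)) = 1 := by
    nth_rw 2 [← mpow_one hτ]
    rw [mpow_mul_mpow hτ, mpow_mul_mpow hτ, ← mpow_zero hτ]
    norm_num
  unfold petzV
  set σ := mpow (trB ρ) (-(1 / 2))
  set R := mpow ρ (1 / 2)
  have hσH : σᴴ = σ := mpow_conjTranspose _ _
  have hRH : Rᴴ = R := mpow_conjTranspose _ _
  calc _ = ((((Y * σ)ᴴ * (X * σ)) ⊗ₖ (1 : Matrix κ κ ℂ)) * (R * R)).trace := by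
        rw [Matrix.conjTranspose_mul, hRH, Matrix.conjTranspose_kronecker,
          Matrix.conjTranspose_one, Matrix.mul_assoc, Matrix.trace_mul_comm,
          ← Matrix.mul_assoc, ← Matrix.mul_kronecker_mul, Matrix.one_mul, Matrix.mul_assoc]
    _ = (σ * (Yᴴ * X * σ * trB ρ)).trace := by
        rw [hR, trace_kronecker_one_mul, Matrix.conjTranspose_mul, hσH]
        simp only [Matrix.mul_assoc]
    _ = (Yᴴ * X * (σ * trB ρ * σ)).trace := by
        rw [Matrix.trace_mul_comm]
        simp only [Matrix.mul_assoc]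
    _ = (Yᴴ * X).trace := by rw [hσ, Matrix.mul_one]
end

section
/- Let ι and κ be nonempty finite types and let ρ and σ be density matrices on ℂ indexed by (ι × κ) × (ι × κ). If the range (column space) of ρ is contained in the range of σ, then the range of Tr_b(ρ) is contained in the range of Tr_b(σ). (Equivalently: supp(ρ) ⊆ supp(σ) implies supp(Tr_b(ρ)) ⊆ supp(Tr_b(σ)), where the support of a positive semidefinite matrix is the orthogonal complement of its kernel, which equals its range.) -/
/-!
Inclusion of ranges of Hermitian matrices is the reverse inclusion of their kernels
(`range_le_range_of_ker_le`, `mulVec_eq_zero_of_range_le`), so it suffices to show that the kernel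
of `Tr_b(σ)` lies in that of `Tr_b(ρ)`. Write `x ⊗ e_k` for the tensor product of `x` with the
`k`-th standard basis vector. The quadratic form of the partial trace is
`⟨x, Tr_b(σ) x⟩ = ∑ k, ⟨x ⊗ e_k, σ (x ⊗ e_k)⟩`. If `Tr_b(σ) x = 0`, this is a vanishing sum of
nonnegative terms, so positivity of `σ` gives `σ (x ⊗ e_k) = 0` for each `k`. Hence
`ρ (x ⊗ e_k) = 0` for each `k`, and `Tr_b(ρ) x`, whose coordinates are
`∑ k, (ρ (x ⊗ e_k)) (i, k)`, is zero.
-/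

open Matrix ComplexOrder Kronecker

/-- The product vector `x ⊗ e_k`, with `e_k` the `k`-th standard basis vector. -/
def tensorBasis {ι κ : Type*} [DecidableEq κ] (x : ι → ℂ) (k : κ) : ι × κ → ℂ :=
  fun p => if p.2 = k then x p.1 else 0

lemma mulVec_tensorBasis {ι κ : Type*} [Fintype ι] [Fintype κ] [DecidableEq κ]
    (A : Matrix (ι × κ) (ι × κ) ℂ) (x : ι → ℂ) (k : κ) (p : ι × κ) :
    (A *ᵥ tensorBasis x k) p = ∑ j, A p (j, k) * x j := by
  simp [mulVec, dotProduct, tensorBasis, Fintype.sum_prod_type]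

lemma trB_mulVec {ι κ : Type*} [Fintype ι] [Fintype κ] [DecidableEq κ]
    (A : Matrix (ι × κ) (ι × κ) ℂ) (x : ι → ℂ) (i : ι) :
    (trB A *ᵥ x) i = ∑ k, (A *ᵥ tensorBasis x k) (i, k) := by
  simp only [mulVec_tensorBasis]
  simp only [mulVec, dotProduct, trB, of_apply, Finset.sum_mul]
  exact Finset.sum_comm

lemma star_dotProduct_trB_mulVec {ι κ : Type*} [Fintype ι] [Fintype κ] [DecidableEq κ]
    (A : Matrix (ι × κ) (ι × κ) ℂ) (x : ι → ℂ) :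
    star x ⬝ᵥ trB A *ᵥ x = ∑ k, star (tensorBasis x k) ⬝ᵥ A *ᵥ tensorBasis x k := by
  have h (k : κ) : star (tensorBasis x k) ⬝ᵥ A *ᵥ tensorBasis x k
      = ∑ i, star (x i) * (A *ᵥ tensorBasis x k) (i, k) := by
    generalize A *ᵥ tensorBasis x k = v
    simp [dotProduct, tensorBasis, Fintype.sum_prod_type, apply_ite]
  simp only [h]
  rw [Finset.sum_comm]
  simp only [dotProduct, trB_mulVec, Finset.mul_sum, Pi.star_apply]

lemma isHermitian_trB {ι κ : Type*} [Fintype κ] {A : Matrix (ι × κ) (ι × κ) ℂ}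
    (hA : A.IsHermitian) : (trB A).IsHermitian := by
  ext i j
  simp only [conjTranspose_apply, trB, of_apply, star_sum, hA.apply]

/-- If `B x = 0` and `A x = B y`, then `⟨x, A x⟩ = ⟨B x, y⟩ = 0`, so `A x = 0` by positivity. -/
lemma mulVec_eq_zero_of_range_le {n : Type*} [Fintype n] {A B : Matrix n n ℂ}
    (hA : A.PosSemidef) (hB : B.IsHermitian)
    (h : LinearMap.range A.mulVecLin ≤ LinearMap.range B.mulVecLin)
    {x : n → ℂ} (hx : B *ᵥ x = 0) : A *ᵥ x = 0 := by
  obtain ⟨y, hy⟩ := h ⟨x, rfl⟩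
  simp only [mulVecLin_apply] at hy
  rw [← hA.dotProduct_mulVec_zero_iff, ← hy, dotProduct_mulVec, ← hB.eq, ← star_mulVec, hx,
    star_zero, zero_dotProduct]

/-- A vector outside `range B` is separated from it by a functional `w ⬝ᵥ ·` vanishing on
`range B`; then `star w` is in the kernel of `B`, hence of `A`, so the functional also vanishes on
`range A`. -/
lemma range_le_range_of_ker_le {n : Type*} [Fintype n] [DecidableEq n] {A B : Matrix n n ℂ}
    (hA : A.IsHermitian) (hB : B.IsHermitian) (h : ∀ x, B *ᵥ x = 0 → A *ᵥ x = 0) :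
    LinearMap.range A.mulVecLin ≤ LinearMap.range B.mulVecLin := by
  rintro _ ⟨x, rfl⟩
  by_contra hx
  obtain ⟨f, hf, hfB⟩ := Submodule.exists_le_ker_of_notMem hx
  obtain ⟨w, rfl⟩ := (dotProductEquiv ℂ n).surjective f
  have hw : w ᵥ* B = 0 := by
    refine dotProduct_eq_zero _ fun v => ?_
    rw [← dotProduct_mulVec]
    exact hfB ⟨v, rfl⟩
  have hBw : B *ᵥ star w = 0 := by
    rw [← hB.eq, ← star_vecMul, hw, star_zero]
  have hAw : w ᵥ* A = 0 := by
    rw [← star_eq_zero, star_vecMul, hA.eq, h _ hBw]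
  apply hf
  change w ⬝ᵥ A *ᵥ x = 0
  rw [dotProduct_mulVec, hAw, zero_dotProduct]

/-- **Support inclusion is preserved by the partial trace.** If `ρ`, `σ` are density matrices
on the composite system whose ranges (supports) satisfy `range ρ ⊆ range σ`, then
`range Tr_b(ρ) ⊆ range Tr_b(σ)`. -/
theorem support_partialTrace_mono {ι κ : Type*}
    [Fintype ι] [DecidableEq ι] [Nonempty ι] [Fintype κ] [DecidableEq κ] [Nonempty κ]
    (ρ σ : Matrix (ι × κ) (ι × κ) ℂ) (hρ : ρ.PosSemidef) (hρtr : ρ.trace = 1)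
    (hσ : σ.PosSemidef) (hσtr : σ.trace = 1)
    (hsupp : LinearMap.range ρ.mulVecLin ≤ LinearMap.range σ.mulVecLin) :
    LinearMap.range (trB ρ).mulVecLin ≤ LinearMap.range (trB σ).mulVecLin := by
  refine range_le_range_of_ker_le (isHermitian_trB hρ.1) (isHermitian_trB hσ.1) fun x hx => ?_
  have hsum : ∑ k, star (tensorBasis x k) ⬝ᵥ σ *ᵥ tensorBasis x k = 0 := by
    rw [← star_dotProduct_trB_mulVec, hx, dotProduct_zero]
  rw [Finset.sum_eq_zero_iff_of_nonneg fun k _ => hσ.dotProduct_mulVec_nonneg _] at hsum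
  have hρ0 (k : κ) : ρ *ᵥ tensorBasis x k = 0 :=
    mulVec_eq_zero_of_range_le hρ hσ.1 hsupp
      ((hσ.dotProduct_mulVec_zero_iff _).1 (hsum k (Finset.mem_univ k)))
  ext i
  simp [trB_mulVec, hρ0]
end

section
/- Let ρ and σ be density matrices on ℂ indexed by a nonempty finite type ι, and suppose the range of ρ is contained in the range of σ. Then, as ε → 0⁺, Re Tr((ρ + εI)·log(ρ + εI) − (ρ + εI)·log(σ + εI)) converges to Re Tr(ρ·log ρ − ρ·log σ), where log is applied via the continuous functional calculus with the convention Real.log 0 = 0. (The regularized definition of relative entropy agrees with the support-based definition when supp(ρ) ⊆ supp(σ).) -/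
/-!
For a fixed Hermitian matrix `A`, the matrix `cfc f A` depends continuously on the finitely many
values of `f` on the spectrum, so pointwise convergence `F ε → f` on the spectrum gives
`cfc (F ε) A → cfc f A` (`tendsto_cfc_of_pointwise`). Moreover `log (A + εI)` is
`cfc (fun x ↦ log (x + ε)) A` (`mlog_add_smul_one`). The entropy term then converges because
`x ↦ x * log x` is continuous.

For the cross term, the range inclusion gives a factorization `ρ = σ * X`, so that by cyclicity
`Tr (ρ * log (σ + εI)) = Tr (X * (log (σ + εI) * σ))`. The factor `σ` removes the singularity of the
logarithm on the kernel: `log (x + ε) * x → log x * x` for every real `x`, including `x = 0`.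
The remaining term `ε * log (σ + εI)` tends to `0` since `ε * log (x + ε) → 0` for every `x`.
-/

open Matrix ComplexOrder Filter

section Helpers

variable {ι : Type*} [Fintype ι] [DecidableEq ι]

/-- Every function is continuous on the spectrum of a Hermitian matrix, which is finite. -/
lemma continuousOn_spectrum_real {A : Matrix ι ι ℂ} (hA : A.IsHermitian) (f : ℝ → ℝ) :
    ContinuousOn f (spectrum ℝ A) := by
  have h : (spectrum ℝ A).Finite := by
    rw [hA.spectrum_real_eq_range_eigenvalues]
    exact Set.finite_range _
  exact h.continuousOn f

/-- The functional calculus of a fixed Hermitian matrix is continuous for pointwise convergence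
of functions. -/
lemma tendsto_cfc_of_pointwise {A : Matrix ι ι ℂ} (hA : A.IsHermitian)
    {F : ℝ → ℝ → ℝ} {f : ℝ → ℝ} {l : Filter ℝ}
    (h : ∀ x, Tendsto (fun ε => F ε x) l (nhds (f x))) :
    Tendsto (fun ε => cfc (F ε) A) l (nhds (cfc f A)) := by
  simp only [hA.cfc_eq, Matrix.IsHermitian.cfc, Unitary.conjStarAlgAut_apply]
  have hd : Tendsto (fun ε => diagonal ((RCLike.ofReal : ℝ → ℂ) ∘ F ε ∘ hA.eigenvalues)) l
      (nhds (diagonal ((RCLike.ofReal : ℝ → ℂ) ∘ f ∘ hA.eigenvalues))) := by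
    refine ((continuous_id.matrix_diagonal).tendsto _).comp (tendsto_pi_nhds.2 fun i => ?_)
    exact (RCLike.continuous_ofReal.tendsto _).comp (h _)
  exact (hd.const_mul _).mul_const _

/-- The spectral shift: `A + εI` is the functional calculus of `x ↦ x + ε`. -/
lemma add_smul_one_eq_cfc {A : Matrix ι ι ℂ} (hA : A.IsHermitian) (ε : ℝ) :
    A + ε • (1 : Matrix ι ι ℂ) = cfc (fun x : ℝ => x + ε) A := by
  have hA' : IsSelfAdjoint A := hA
  rw [cfc_add_const ε (fun x => x) A (continuousOn_spectrum_real hA _) hA', cfc_id' ℝ A hA',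
    Algebra.algebraMap_eq_smul_one]

lemma mlog_add_smul_one {A : Matrix ι ι ℂ} (hA : A.IsHermitian) (ε : ℝ) :
    mlog (A + ε • (1 : Matrix ι ι ℂ)) = cfc (fun x : ℝ => Real.log (x + ε)) A := by
  have hA' : IsSelfAdjoint A := hA
  have hfin : ((fun x : ℝ => x + ε) '' spectrum ℝ A).Finite := by
    rw [hA.spectrum_real_eq_range_eigenvalues]
    exact (Set.finite_range _).image _
  rw [mlog, add_smul_one_eq_cfc hA, ← cfc_comp' Real.log (fun x : ℝ => x + ε) A
    (hfin.continuousOn _) (continuousOn_spectrum_real hA _) hA']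

/-- Range inclusion of matrices gives a factorization, chosen column by column. -/
lemma exists_eq_mul_of_range_le {A B : Matrix ι ι ℂ}
    (h : LinearMap.range A.mulVecLin ≤ LinearMap.range B.mulVecLin) :
    ∃ X : Matrix ι ι ℂ, A = B * X := by
  have hcol : ∀ j, ∃ v, B *ᵥ v = A *ᵥ Pi.single j 1 := fun j => h ⟨Pi.single j 1, rfl⟩
  choose v hv using hcol
  refine ⟨(Matrix.of v)ᵀ, ?_⟩
  ext i j
  have := congrFun (hv j) i
  rw [mulVec_single_one] at this
  exact this.symm

lemma tendsto_add_zero_right (x : ℝ) :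
    Tendsto (fun ε : ℝ => x + ε) (nhdsWithin 0 (Set.Ioi 0)) (nhds x) := by
  have : Tendsto (fun ε : ℝ => x + ε) (nhds 0) (nhds (x + 0)) :=
    (continuous_const.add continuous_id).tendsto 0
  rw [add_zero] at this
  exact this.mono_left nhdsWithin_le_nhds

lemma tendsto_log_add_mul_self (x : ℝ) :
    Tendsto (fun ε : ℝ => Real.log (x + ε) * x) (nhdsWithin 0 (Set.Ioi 0))
      (nhds (Real.log x * x)) := by
  rcases eq_or_ne x 0 with rfl | hx
  · simp
  · exact ((tendsto_add_zero_right x).log hx).mul_const x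

lemma tendsto_mul_log_add (x : ℝ) :
    Tendsto (fun ε : ℝ => ε * Real.log (x + ε)) (nhdsWithin 0 (Set.Ioi 0)) (nhds 0) := by
  rcases eq_or_ne x 0 with rfl | hx
  · have h := (Real.continuous_mul_log.tendsto 0).mono_left
      (nhdsWithin_le_nhds (s := Set.Ioi (0 : ℝ)))
    simpa using h
  · have h0 : Tendsto (fun ε : ℝ => ε) (nhdsWithin 0 (Set.Ioi 0)) (nhds 0) :=
      tendsto_id.mono_left nhdsWithin_le_nhds
    simpa using h0.mul ((tendsto_add_zero_right x).log hx)

lemma tendsto_entropy {A : Matrix ι ι ℂ} (hA : A.IsHermitian) :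
    Tendsto (fun ε : ℝ => (A + ε • 1) * mlog (A + ε • 1)) (nhdsWithin 0 (Set.Ioi 0))
      (nhds (A * mlog A)) := by
  have hA' : IsSelfAdjoint A := hA
  have hc := continuousOn_spectrum_real hA
  have h1 : ∀ ε : ℝ, (A + ε • 1) * mlog (A + ε • 1)
      = cfc (fun x : ℝ => (x + ε) * Real.log (x + ε)) A := fun ε => by
    rw [mlog_add_smul_one hA, add_smul_one_eq_cfc hA, ← cfc_mul _ _ A (hc _) (hc _)]
  have h2 : A * mlog A = cfc (fun x : ℝ => x * Real.log x) A := by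
    rw [cfc_mul _ _ A (hc _) (hc _), cfc_id' ℝ A hA', mlog]
  simp only [h1, h2]
  exact tendsto_cfc_of_pointwise hA fun x =>
    (Real.continuous_mul_log.tendsto x).comp (tendsto_add_zero_right x)

lemma tendsto_mlog_mul_self {A : Matrix ι ι ℂ} (hA : A.IsHermitian) :
    Tendsto (fun ε : ℝ => mlog (A + ε • 1) * A) (nhdsWithin 0 (Set.Ioi 0))
      (nhds (mlog A * A)) := by
  have hA' : IsSelfAdjoint A := hA
  have hc := continuousOn_spectrum_real hA
  have h (f : ℝ → ℝ) : cfc f A * A = cfc (fun x : ℝ => f x * x) A := by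
    rw [cfc_mul _ _ A (hc _) (hc _), cfc_id' ℝ A hA']
  simp only [mlog_add_smul_one hA, h]
  rw [mlog, h]
  exact tendsto_cfc_of_pointwise hA tendsto_log_add_mul_self

lemma tendsto_smul_mlog {A : Matrix ι ι ℂ} (hA : A.IsHermitian) :
    Tendsto (fun ε : ℝ => ε • mlog (A + ε • 1)) (nhdsWithin 0 (Set.Ioi 0)) (nhds 0) := by
  have hc := continuousOn_spectrum_real hA
  have h1 : ∀ ε : ℝ, ε • mlog (A + ε • 1) = cfc (fun x : ℝ => ε * Real.log (x + ε)) A :=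
    fun ε => by rw [mlog_add_smul_one hA, cfc_const_mul ε _ A (hc _)]
  simp only [h1]
  rw [← cfc_const_zero ℝ A]
  exact tendsto_cfc_of_pointwise hA tendsto_mul_log_add

end Helpers

/-- **The regularized relative entropy converges to the support-based one.** If `ρ`, `σ` are
density matrices with `range ρ ⊆ range σ`, then as `ε → 0⁺`,
`Re Tr((ρ+εI)·log(ρ+εI) − (ρ+εI)·log(σ+εI))` converges to `Re Tr(ρ·log ρ − ρ·log σ)`,
with the convention `Real.log 0 = 0` in the functional calculus. -/
theorem regularized_relEntropy_tendsto {ι : Type*} [Fintype ι] [DecidableEq ι] [Nonempty ι]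
    (ρ σ : Matrix ι ι ℂ) (hρ : ρ.PosSemidef) (hρtr : ρ.trace = 1)
    (hσ : σ.PosSemidef) (hσtr : σ.trace = 1)
    (hsupp : LinearMap.range ρ.mulVecLin ≤ LinearMap.range σ.mulVecLin) :
    Tendsto (fun ε : ℝ =>
        ((ρ + ε • 1) * mlog (ρ + ε • 1) - (ρ + ε • 1) * mlog (σ + ε • 1)).trace.re)
      (nhdsWithin 0 (Set.Ioi 0))
      (nhds ((ρ * mlog ρ - ρ * mlog σ).trace.re)) := by
  obtain ⟨X, hX⟩ := exists_eq_mul_of_range_le hsupp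
  have hcyc (L : Matrix ι ι ℂ) : (ρ * L).trace = (X * (L * σ)).trace := by
    rw [hX, trace_mul_cycle', Matrix.mul_assoc, trace_mul_comm, Matrix.mul_assoc,
      trace_mul_comm, Matrix.mul_assoc]
  have htr : Continuous (trace : Matrix ι ι ℂ → ℂ) := continuous_id.matrix_trace
  have h1 := (htr.tendsto _).comp (tendsto_entropy hρ.isHermitian)
  have h2 := (htr.tendsto _).comp ((tendsto_mlog_mul_self hσ.isHermitian).const_mul X)
  have h3 := (htr.tendsto _).comp (tendsto_smul_mlog hσ.isHermitian)
  have h := (Complex.continuous_re.tendsto _).comp (h1.sub (h2.add h3))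
  rw [trace_zero, add_zero, ← hcyc, ← trace_sub] at h
  refine h.congr fun ε => ?_
  simp only [Function.comp_apply]
  rw [trace_sub, add_mul ρ (ε • 1) (mlog (σ + ε • 1)), trace_add, hcyc, smul_mul_assoc, one_mul]
end

section
/- Let ι and κ be nonempty finite types, let ρ and σ be density matrices on ℂ indexed by (ι × κ) × (ι × κ), and let t ∈ [0,1]. Then Re Tr(ρ^{1−t} · σ^{t}) ≤ Re Tr(Tr_b(ρ)^{1−t} · Tr_b(σ)^{t}). (This trace inequality, evaluated on the identity, is the core of Uhlmann's proof: differentiating at t = 0 yields the monotonicity of relative entropy under partial trace.) -/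
/-!
The proof goes through the variational description of the parallel sum of two positive numbers:
if `p, q ≥ 0`, `l > 0` and `y + z = g` in `ℂ`, then
`l p q / (l p + q) * |g|² ≤ l p |y|² + q |z|²`, and equality is attained.

Diagonalise `ρ = U diag(p) Uᴴ` and `σ = W diag(q) Wᴴ`, and put `G = Uᴴ W`. Applying the scalar
fact to every entry of `G` shows that, for
`F(l) = ∑ i j, p i q j / (l p i + q j) * |G i j|²`, the number `l F(l)` is the minimum over all matrices `Y` of the
cost `l Tr(ρ Y Yᴴ) + Tr(σ (1 - Y)ᴴ (1 - Y))` (`parallel_le_cost`, `exists_cost_eq_parallel`).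
The cost of `Y ⊗ 1` for the pair `(ρ, σ)` equals the cost of `Y` for the pair of marginals
(`cost_kronecker`), so the minimum for `(ρ, σ)` is at most the minimum for the marginals.

For `0 < t < 1`, the representation
`p^(1-t) q^t = C⁻¹ ∫ l in (0, ∞), l^(t-1) * (p q / (l p + q))` turns this comparison, integrated
over `l`, into the inequality between the traces, because
`Tr(ρ^(1-t) σ^t) = ∑ i j, p i^(1-t) q j^t |G i j|²`. At `t = 0` and `t = 1` both sides are
traces of `ρ`, respectively `σ`.
-/

open Matrix ComplexOrder Kronecker

namespace Uhlmann

open MeasureTheory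

/-! ### Spectral form of the cost functional -/

section Spectral

variable {n : Type*} [Fintype n] [DecidableEq n]

/-- The matrix `U diag(d) Uᴴ`. -/
noncomputable def conjDiag (U : Matrix n n ℂ) (d : n → ℝ) : Matrix n n ℂ :=
  U * diagonal (fun i => (d i : ℂ)) * Uᴴ

lemma exists_spectral {M : Matrix n n ℂ} (hM : M.PosSemidef) :
    ∃ (U : Matrix n n ℂ) (d : n → ℝ), Uᴴ * U = 1 ∧ U * Uᴴ = 1 ∧ (∀ i, 0 ≤ d i) ∧
      M = conjDiag U d ∧ ∀ s : ℝ, mpow M s = conjDiag U (fun i => d i ^ s) := by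
  have h := hM.isHermitian
  refine ⟨h.eigenvectorUnitary, h.eigenvalues, ?_, ?_, hM.eigenvalues_nonneg, ?_, ?_⟩
  · exact Unitary.coe_star_mul_self h.eigenvectorUnitary
  · exact Unitary.coe_mul_star_self h.eigenvectorUnitary
  · exact h.spectral_theorem
  · intro s
    exact h.cfc_eq _

lemma mpow_zero {M : Matrix n n ℂ} (hM : M.PosSemidef) : mpow M 0 = 1 := by
  obtain ⟨U, d, -, hU, -, -, h⟩ := exists_spectral hM
  simp [h, conjDiag, hU]

lemma mpow_one {M : Matrix n n ℂ} (hM : M.PosSemidef) : mpow M 1 = M := by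
  obtain ⟨U, d, -, -, -, hM', h⟩ := exists_spectral hM
  simp [h, ← hM']

lemma trace_diag_sandwich (a b : n → ℝ) (G : Matrix n n ℂ) :
    (diagonal (fun i => (a i : ℂ)) * G * diagonal (fun j => (b j : ℂ)) * Gᴴ).trace.re =
      ∑ i, ∑ j, a i * b j * Complex.normSq (G i j) := by
  simp only [trace, diag_apply, mul_apply (N := Gᴴ), mul_diagonal, diagonal_mul,
    conjTranspose_apply, Complex.re_sum]
  refine Finset.sum_congr rfl fun i _ => Finset.sum_congr rfl fun j _ => ?_
  have : (a i : ℂ) * G i j * b j * star (G i j) =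
      ((a i * b j * Complex.normSq (G i j) : ℝ) : ℂ) := by
    push_cast
    rw [← Complex.mul_conj]
    simp only [Complex.star_def]
    ring
  rw [this, Complex.ofReal_re]

lemma trace_conjDiag_mul_conjDiag (U W : Matrix n n ℂ) (a b : n → ℝ) :
    (conjDiag U a * conjDiag W b).trace.re =
      ∑ i, ∑ j, a i * b j * Complex.normSq ((Uᴴ * W) i j) := by
  rw [← trace_diag_sandwich]
  congr 1
  rw [conjDiag, conjDiag, conjTranspose_mul, conjTranspose_conjTranspose, Matrix.mul_assoc U,
    Matrix.mul_assoc U, trace_mul_comm U]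
  simp only [Matrix.mul_assoc]

/-- The quadratic functional whose minimum over `Y` is `⟨1, (A : B) 1⟩` for the Hilbert-Schmidt
inner product, where `A : B` is the parallel sum of the left multiplication by `l ρ` and the right
multiplication by `σ`. -/
noncomputable def cost (l : ℝ) (ρ σ Y : Matrix n n ℂ) : ℝ :=
  l * (ρ * (Y * Yᴴ)).trace.re + (σ * ((1 - Y)ᴴ * (1 - Y))).trace.re

lemma cost_eq_sum {U W : Matrix n n ℂ} (hU : U * Uᴴ = 1) (hW : W * Wᴴ = 1) (p q : n → ℝ)
    (l : ℝ) (Y : Matrix n n ℂ) :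
    cost l (conjDiag U p) (conjDiag W q) Y =
      ∑ i, ∑ j, (l * p i * Complex.normSq ((Uᴴ * Y * W) i j) +
        q j * Complex.normSq ((Uᴴ * W) i j - (Uᴴ * Y * W) i j)) := by
  have h1 := trace_diag_sandwich p (fun _ => 1) (Uᴴ * Y * W)
  have h2 := trace_diag_sandwich (fun _ => 1) q (Uᴴ * (1 - Y) * W)
  have e1 : (conjDiag U p * (Y * Yᴴ)).trace =
      (diagonal (fun i => (p i : ℂ)) * (Uᴴ * Y * W) * diagonal (fun _ => ((1 : ℝ) : ℂ)) *
        (Uᴴ * Y * W)ᴴ).trace := by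
    have : (Uᴴ * Y * W) * (Uᴴ * Y * W)ᴴ = Uᴴ * (Y * Yᴴ) * U := by
      calc _ = Uᴴ * Y * (W * Wᴴ) * Yᴴ * U := by
            simp only [conjTranspose_mul, conjTranspose_conjTranspose, Matrix.mul_assoc]
        _ = _ := by rw [hW]; simp only [Matrix.mul_assoc, Matrix.one_mul]
    simp only [Complex.ofReal_one, diagonal_one, Matrix.mul_one]
    rw [Matrix.mul_assoc (diagonal _), this, conjDiag, Matrix.mul_assoc U, Matrix.mul_assoc U,
      trace_mul_comm U]
    simp only [Matrix.mul_assoc]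
  have e2 : (conjDiag W q * ((1 - Y)ᴴ * (1 - Y))).trace =
      (diagonal (fun _ => ((1 : ℝ) : ℂ)) * (Uᴴ * (1 - Y) * W) * diagonal (fun i => (q i : ℂ)) *
        (Uᴴ * (1 - Y) * W)ᴴ).trace := by
    generalize 1 - Y = Z
    have : (Uᴴ * Z * W)ᴴ * (Uᴴ * Z * W) = Wᴴ * (Zᴴ * Z) * W := by
      calc _ = Wᴴ * Zᴴ * (U * Uᴴ) * Z * W := by
            simp only [conjTranspose_mul, conjTranspose_conjTranspose, Matrix.mul_assoc]
        _ = _ := by rw [hU]; simp only [Matrix.mul_assoc, Matrix.one_mul]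
    simp only [Complex.ofReal_one, diagonal_one, Matrix.one_mul]
    rw [Matrix.mul_assoc (Uᴴ * Z * W), trace_mul_comm (Uᴴ * Z * W), Matrix.mul_assoc (diagonal _),
      this, conjDiag, Matrix.mul_assoc W, Matrix.mul_assoc W, trace_mul_comm W]
    simp only [Matrix.mul_assoc]
  rw [cost, e1, e2, h1, h2, Finset.mul_sum, ← Finset.sum_add_distrib]
  refine Finset.sum_congr rfl fun i _ => ?_
  rw [Finset.mul_sum, ← Finset.sum_add_distrib]
  refine Finset.sum_congr rfl fun j _ => ?_
  simp only [Matrix.mul_sub, Matrix.sub_mul, Matrix.mul_one, Matrix.sub_apply]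
  ring

lemma parallel_scalar_le {l p q : ℝ} (hl : 0 < l) (hp : 0 ≤ p) (hq : 0 ≤ q) (g y : ℂ) :
    p * q / (l * p + q) * (l * Complex.normSq g) ≤
      l * p * Complex.normSq y + q * Complex.normSq (g - y) := by
  have h1 := Complex.normSq_nonneg y
  have h2 := Complex.normSq_nonneg (g - y)
  have hlp : 0 ≤ l * p := mul_nonneg hl.le hp
  rcases (add_nonneg hlp hq).eq_or_lt with h | h
  · rw [← h]
    simp only [div_zero, zero_mul]
    positivity
  · rw [div_mul_eq_mul_div, div_le_iff₀ h]
    simp only [Complex.normSq_apply, Complex.sub_re, Complex.sub_im]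
    -- The difference of the two sides is `|l p y - q (g - y)|²`.
    nlinarith [sq_nonneg (l * p * y.re - q * (g.re - y.re)),
      sq_nonneg (l * p * y.im - q * (g.im - y.im))]

lemma parallel_scalar_eq {l p q : ℝ} (hl : 0 < l) (hp : 0 ≤ p) (hq : 0 ≤ q) (g : ℂ) :
    l * p * Complex.normSq (((q / (l * p + q) : ℝ) : ℂ) * g) +
        q * Complex.normSq (g - ((q / (l * p + q) : ℝ) : ℂ) * g) =
      p * q / (l * p + q) * (l * Complex.normSq g) := by
  have hlp : 0 ≤ l * p := mul_nonneg hl.le hp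
  have e : g - ((q / (l * p + q) : ℝ) : ℂ) * g = ((1 - q / (l * p + q) : ℝ) : ℂ) * g := by
    push_cast; ring
  rw [e, Complex.normSq_mul, Complex.normSq_mul, Complex.normSq_ofReal, Complex.normSq_ofReal]
  rcases (add_nonneg hlp hq).eq_or_lt with h | h
  · have hq0 : q = 0 := by linarith
    have hp0 : l * p = 0 := by linarith
    simp [hq0, hp0]
  · field_simp
    ring

/-- The minimum of `cost l`, divided by `l`, in diagonal form: `p` and `q` are the eigenvalues and
`G` is the transition matrix between the two eigenbases. A term with `p i = q j = 0` is `0`. -/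
noncomputable def parallel (p q : n → ℝ) (G : Matrix n n ℂ) (l : ℝ) : ℝ :=
  ∑ i, ∑ j, p i * q j / (l * p i + q j) * Complex.normSq (G i j)

lemma parallel_le_cost {U W : Matrix n n ℂ} (hU : U * Uᴴ = 1) (hW : W * Wᴴ = 1) {p q : n → ℝ}
    (hp : ∀ i, 0 ≤ p i) (hq : ∀ i, 0 ≤ q i) {l : ℝ} (hl : 0 < l) (Y : Matrix n n ℂ) :
    l * parallel p q (Uᴴ * W) l ≤ cost l (conjDiag U p) (conjDiag W q) Y := by
  rw [cost_eq_sum hU hW, parallel, Finset.mul_sum]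
  refine Finset.sum_le_sum fun i _ => ?_
  rw [Finset.mul_sum]
  refine Finset.sum_le_sum fun j _ => ?_
  rw [mul_left_comm]
  exact parallel_scalar_le hl (hp i) (hq j) _ _

lemma exists_cost_eq_parallel {U W : Matrix n n ℂ} (hU : U * Uᴴ = 1) (hW : W * Wᴴ = 1)
    (hU' : Uᴴ * U = 1) (hW' : Wᴴ * W = 1) {p q : n → ℝ}
    (hp : ∀ i, 0 ≤ p i) (hq : ∀ i, 0 ≤ q i) {l : ℝ} (hl : 0 < l) :
    ∃ Y, cost l (conjDiag U p) (conjDiag W q) Y = l * parallel p q (Uᴴ * W) l := by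
  let y : Matrix n n ℂ :=
    Matrix.of fun i j => ((q j / (l * p i + q j) : ℝ) : ℂ) * (Uᴴ * W) i j
  refine ⟨U * y * Wᴴ, ?_⟩
  have hy : Uᴴ * (U * y * Wᴴ) * W = y := by
    calc _ = (Uᴴ * U) * y * (Wᴴ * W) := by simp only [Matrix.mul_assoc]
      _ = y := by rw [hU', hW', Matrix.one_mul, Matrix.mul_one]
  rw [cost_eq_sum hU hW, parallel, Finset.mul_sum, hy]
  refine Finset.sum_congr rfl fun i _ => ?_
  rw [Finset.mul_sum]
  refine Finset.sum_congr rfl fun j _ => ?_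
  rw [mul_left_comm]
  exact parallel_scalar_eq hl (hp i) (hq j) _

end Spectral

/-! ### Partial trace -/

section PartialTrace

variable {ι κ : Type*} [Fintype κ]

lemma trB_posSemidef {A : Matrix (ι × κ) (ι × κ) ℂ} (hA : A.PosSemidef) :
    (trB A).PosSemidef := by
  have : trB A = ∑ k : κ, A.submatrix (fun i => (i, k)) (fun i => (i, k)) := by
    ext i j
    simp [trB, Matrix.sum_apply]
  rw [this]
  exact posSemidef_sum _ fun k _ => hA.submatrix _

variable [Fintype ι] [DecidableEq κ]

/-- The partial trace is dual to the embedding `Y ↦ Y ⊗ 1`. -/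
lemma trace_mul_kronecker_one (A : Matrix (ι × κ) (ι × κ) ℂ) (Y : Matrix ι ι ℂ) :
    (A * (Y ⊗ₖ (1 : Matrix κ κ ℂ))).trace = (trB A * Y).trace := by
  simp only [trace, diag_apply, mul_apply, Fintype.sum_prod_type, kroneckerMap_apply, trB,
    of_apply, one_apply, mul_ite, mul_one, mul_zero, Finset.sum_ite_eq', Finset.mem_univ, if_true,
    Finset.sum_mul]
  refine Finset.sum_congr rfl fun i _ => ?_
  rw [Finset.sum_comm]

variable [DecidableEq ι]

lemma trace_trB (A : Matrix (ι × κ) (ι × κ) ℂ) : (trB A).trace = A.trace := by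
  have := trace_mul_kronecker_one A 1
  simpa using this.symm

lemma cost_kronecker (l : ℝ) (ρ σ : Matrix (ι × κ) (ι × κ) ℂ) (Y : Matrix ι ι ℂ) :
    cost l ρ σ (Y ⊗ₖ (1 : Matrix κ κ ℂ)) = cost l (trB ρ) (trB σ) Y := by
  have h : (1 : Matrix (ι × κ) (ι × κ) ℂ) - Y ⊗ₖ (1 : Matrix κ κ ℂ) =
      (1 - Y) ⊗ₖ (1 : Matrix κ κ ℂ) := by
    ext ⟨i, k⟩ ⟨j, m⟩
    by_cases h : k = m <;> simp [kroneckerMap_apply, one_apply, h]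
  rw [cost, cost, h, conjTranspose_kronecker, conjTranspose_kronecker, ← mul_kronecker_mul,
    ← mul_kronecker_mul, conjTranspose_one, Matrix.mul_one, trace_mul_kronecker_one,
    trace_mul_kronecker_one]

end PartialTrace

/-! ### Integral representation of the power -/

section Integral

/-- The constant `∫ l in (0, ∞), l^(t-1) / (l + 1)` normalising the integral representation of
`x ↦ x^t`. -/
noncomputable def normConst (t : ℝ) : ℝ :=
  ∫ l in Set.Ioi (0 : ℝ), Real.rpowIntegrand₀₁ t l 1

variable {t : ℝ}

lemma mul_rpowIntegrand (ht : t ∈ Set.Ioo (0 : ℝ) 1) {p q l : ℝ} (hp : 0 ≤ p) (hq : 0 ≤ q)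
    (hl : 0 < l) :
    p * Real.rpowIntegrand₀₁ t l (q / p) = l ^ (t - 1) * (p * q / (l * p + q)) := by
  rw [Real.rpowIntegrand₀₁_eq_pow_div ht hl.le (div_nonneg hq hp)]
  rcases hp.eq_or_lt with rfl | hp
  · simp
  · have : 0 < l * p + q := by positivity
    have : 0 < l + q / p := by positivity
    field_simp

lemma integrableOn_parallel_scalar (ht : t ∈ Set.Ioo (0 : ℝ) 1) {p q : ℝ} (hp : 0 ≤ p)
    (hq : 0 ≤ q) :
    IntegrableOn (fun l : ℝ => l ^ (t - 1) * (p * q / (l * p + q))) (Set.Ioi 0) := by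
  have h := (Real.integrableOn_rpowIntegrand₀₁_Ioi ht (div_nonneg hq hp)).const_mul p
  exact IntegrableOn.congr_fun h (fun l hl => mul_rpowIntegrand ht hp hq hl) measurableSet_Ioi

lemma integral_parallel_scalar (ht : t ∈ Set.Ioo (0 : ℝ) 1) {p q : ℝ} (hp : 0 ≤ p)
    (hq : 0 ≤ q) :
    ∫ l in Set.Ioi (0 : ℝ), l ^ (t - 1) * (p * q / (l * p + q)) =
      p ^ (1 - t) * q ^ t * normConst t := by
  rw [← setIntegral_congr_fun measurableSet_Ioi
    (fun l hl => mul_rpowIntegrand ht hp hq hl), integral_const_mul,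
    Real.integral_rpowIntegrand₀₁_eq_rpow_mul_const ht (div_nonneg hq hp), normConst, ← mul_assoc]
  congr 1
  rcases hp.eq_or_lt with rfl | hp
  · simp [Real.zero_rpow (sub_pos.2 ht.2).ne']
  · rw [Real.div_rpow hq hp.le, Real.rpow_sub hp, Real.rpow_one]
    ring

variable {n : Type*} [Fintype n]

lemma integrableOn_parallel (ht : t ∈ Set.Ioo (0 : ℝ) 1) {p q : n → ℝ} (hp : ∀ i, 0 ≤ p i)
    (hq : ∀ i, 0 ≤ q i) (G : Matrix n n ℂ) :
    IntegrableOn (fun l : ℝ => l ^ (t - 1) * parallel p q G l) (Set.Ioi 0) := by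
  simp only [parallel, Finset.mul_sum, ← mul_assoc]
  exact integrable_finsetSum _ fun i _ => integrable_finsetSum _ fun j _ =>
    (integrableOn_parallel_scalar ht (hp i) (hq j)).mul_const _

lemma integral_parallel (ht : t ∈ Set.Ioo (0 : ℝ) 1) {p q : n → ℝ} (hp : ∀ i, 0 ≤ p i)
    (hq : ∀ i, 0 ≤ q i) (G : Matrix n n ℂ) :
    ∫ l in Set.Ioi (0 : ℝ), l ^ (t - 1) * parallel p q G l =
      (∑ i, ∑ j, p i ^ (1 - t) * q j ^ t * Complex.normSq (G i j)) * normConst t := by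
  simp only [parallel, Finset.mul_sum, ← mul_assoc]
  have hint := fun i j => (integrableOn_parallel_scalar ht (hp i) (hq j)).mul_const
    (Complex.normSq (G i j))
  rw [integral_finsetSum _ fun i _ => integrable_finsetSum _ fun j _ => hint i j, Finset.sum_mul]
  refine Finset.sum_congr rfl fun i _ => ?_
  rw [integral_finsetSum _ fun j _ => hint i j, Finset.sum_mul]
  refine Finset.sum_congr rfl fun j _ => ?_
  rw [integral_mul_const, integral_parallel_scalar ht (hp i) (hq j)]
  ring

end Integral

end Uhlmann

/-- **Uhlmann's trace inequality.** For density matrices `ρ`, `σ` on the composite system and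
`t ∈ [0,1]`, `Re Tr(ρ^{1−t} · σ^t) ≤ Re Tr(Tr_b(ρ)^{1−t} · Tr_b(σ)^t)`. -/
theorem uhlmann_trace_inequality {ι κ : Type*}
    [Fintype ι] [DecidableEq ι] [Nonempty ι] [Fintype κ] [DecidableEq κ] [Nonempty κ]
    (ρ σ : Matrix (ι × κ) (ι × κ) ℂ) (hρ : ρ.PosSemidef) (hρtr : ρ.trace = 1)
    (hσ : σ.PosSemidef) (hσtr : σ.trace = 1)
    (t : ℝ) (ht : t ∈ Set.Icc (0:ℝ) 1) :
    (mpow ρ (1 - t) * mpow σ t).trace.re ≤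
      (mpow (trB ρ) (1 - t) * mpow (trB σ) t).trace.re := by
  open Uhlmann in
  have hρa := trB_posSemidef hρ
  have hσa := trB_posSemidef hσ
  rcases ht.1.eq_or_lt with rfl | h0
  · rw [sub_zero, mpow_zero hσ, mpow_zero hσa, mpow_one hρ, mpow_one hρa, mul_one, mul_one,
      trace_trB]
  rcases ht.2.eq_or_lt with rfl | h1
  · rw [sub_self, mpow_zero hρ, mpow_zero hρa, mpow_one hσ, mpow_one hσa, one_mul, one_mul,
      trace_trB]
  have ht' : t ∈ Set.Ioo (0 : ℝ) 1 := ⟨h0, h1⟩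
  obtain ⟨U, p, -, hU, hp, hρe, hρp⟩ := exists_spectral hρ
  obtain ⟨W, q, -, hW, hq, hσe, hσp⟩ := exists_spectral hσ
  obtain ⟨U', p', hUa', hUa, hpa, hρae, hρap⟩ := exists_spectral hρa
  obtain ⟨W', q', hWa', hWa, hqa, hσae, hσap⟩ := exists_spectral hσa
  have key : ∀ l : ℝ, 0 < l → parallel p q (Uᴴ * W) l ≤ parallel p' q' (U'ᴴ * W') l := by
    intro l hl
    obtain ⟨Y, hY⟩ := exists_cost_eq_parallel hUa hWa hUa' hWa' hpa hqa hl
    have h := parallel_le_cost hU hW hp hq hl (Y ⊗ₖ (1 : Matrix κ κ ℂ))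
    rw [← hρe, ← hσe, cost_kronecker, hρae, hσae, hY] at h
    exact le_of_mul_le_mul_left h hl
  have hint := MeasureTheory.setIntegral_mono_on (integrableOn_parallel ht' hp hq (Uᴴ * W))
    (integrableOn_parallel ht' hpa hqa (U'ᴴ * W')) measurableSet_Ioi fun l hl =>
      mul_le_mul_of_nonneg_left (key l hl) (Real.rpow_nonneg (le_of_lt hl) _)
  rw [integral_parallel ht' hp hq, integral_parallel ht' hpa hqa] at hint
  rw [hρp, hσp, hρap, hσap, trace_conjDiag_mul_conjDiag, trace_conjDiag_mul_conjDiag]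
  exact le_of_mul_le_mul_right hint (Real.integral_rpowIntegrand₀₁_one_pos ht')
end
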